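/- For every integer n > 3, μ(P_{2^n−1}) = (n−3)·2^n + 4; that is, the maximum number of edges that can be added to the path P_{2^n−1} without changing its rank number is (n−3)·2^n + 4. -/

import Mathlib

/-!
The path on `2 ^ n - 1` vertices has rank number `n`, and its only `n`-ranking is the ruler
function `i ↦ ν₂(i) + 1`: the top label occurs once, and the two halves it cuts off have at most
`2 ^ (n - 1) - 1` vertices each, so the top vertex is the midpoint and one recurses
(`ruler_unique`).

Hence an edge set `S` keeps the rank number equal to `n` iff the ruler function is still a ranking
of the enlarged graph. An edge `uv` with `ν₂(u) ≤ ν₂(v) = ℓ` is harmless exactly when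
`|u - v| < 2 ^ ℓ`. If not, then `u` lies in the block of another vertex `w` with `ν₂(w) = ℓ`, and
going from `v` to `u` and then along the path to `w` never exceeds the label `ℓ + 1`
(`near_of_ranking`). Conversely, an edge `uv` with `|u - v| < 2 ^ ℓ` stays in the same block of
length `2 ^ (ℓ + 1)`, so even after all such edges are added, two vertices with the same label are
still separated by a larger one (`isRanking_of_near`).

The harmless pairs number `∑ v, (2 * 2 ^ ν₂(v) - 2) = (n - 2) * 2 ^ n + 2`, and `2 ^ n - 2` of them
are edges of the path.
-/

open SimpleGraph

/-- `f` is a `k`-ranking of `G`: labels lie in `{1,…,k}` and whenever two distinct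
vertices get the same label, every path connecting them contains a vertex of
strictly larger label. -/
def IsRanking {V : Type*} (G : SimpleGraph V) (k : ℕ) (f : V → ℕ) : Prop :=
  (∀ v, 1 ≤ f v ∧ f v ≤ k) ∧
  ∀ u v, u ≠ v → f u = f v → ∀ p : G.Walk u v, p.IsPath → ∃ w ∈ p.support, f u < f w

/-- The rank number `χᵣ(G)`: the least `k` such that `G` admits a `k`-ranking. -/
noncomputable def rankNumber {V : Type*} (G : SimpleGraph V) : ℕ :=
  sInf {k | ∃ f : V → ℕ, IsRanking G k f}

/-- The path `P_n` on vertices `v_1, …, v_n` (vertex `vᵢ` is the natural number `i`),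
with edges `vᵢ v_{i+1}` for `1 ≤ i ≤ n - 1`. -/
def pathG (n : ℕ) : SimpleGraph ℕ :=
  SimpleGraph.fromRel (fun a b => 1 ≤ a ∧ b = a + 1 ∧ b ≤ n)

/-- `μ(G)` for a graph with carrier `ℕ` whose actual vertex set is `Vs`: the maximum
cardinality of a set `S` of edges on `Vs` (non-loops, disjoint from `E(G)`) such that
`χᵣ(G ∪ S) = χᵣ(G)`. -/
noncomputable def muOn (G : SimpleGraph ℕ) (Vs : Set ℕ) : ℕ :=
  sSup {N | ∃ S : Finset (Sym2 ℕ), S.card = N ∧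
    (∀ e ∈ S, ¬e.IsDiag ∧ (∀ x ∈ e, x ∈ Vs) ∧ e ∉ G.edgeSet) ∧
    rankNumber (G ⊔ SimpleGraph.fromEdgeSet (S : Set (Sym2 ℕ))) = rankNumber G}

local notation "ν" => padicValNat 2

/-- The pair `u, v` is comparable: `u` lies in the open interval of radius `2 ^ ν v` about `v`, that
is, `u` is below `v` in the binary tree underlying the ruler function. -/
def Near (u v : ℕ) : Prop := u < v + 2 ^ ν v ∧ v < u + 2 ^ ν v

/-- `f` satisfies the ranking condition along the consecutive integers `a + 1, …, a + m`. -/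
def GoodOn (f : ℕ → ℕ) (a m : ℕ) : Prop :=
  ∀ i j, a < i → i < j → j ≤ a + m → f i = f j → ∃ l, i < l ∧ l < j ∧ f i < f l

/-! ### The 2-adic valuation -/

lemma le_nu_iff {x : ℕ} (hx : x ≠ 0) (k : ℕ) : k ≤ ν x ↔ 2 ^ k ∣ x :=
  (padicValNat_dvd_iff_le hx).symm

lemma nu_decomp {x : ℕ} (hx : x ≠ 0) : ∃ m, x = 2 ^ ν x * (2 * m + 1) := by
  obtain ⟨c, hc⟩ : 2 ^ ν x ∣ x := pow_padicValNat_dvd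
  have hodd : ¬ 2 ∣ c := by
    rintro ⟨d, rfl⟩
    have h : 2 ^ (ν x + 1) ∣ x := ⟨d, by rw [pow_succ]; linarith⟩
    have := (le_nu_iff hx _).2 h
    omega
  exact ⟨c / 2, by rw [show 2 * (c / 2) + 1 = c by omega]; exact hc⟩

lemma nu_eq_of_decomp {k m x : ℕ} (hx : x = 2 ^ k * (2 * m + 1)) : ν x = k := by
  have h0 : x ≠ 0 := by rw [hx]; positivity
  apply le_antisymm
  · by_contra! h
    have h2 : 2 ^ (k + 1) ∣ x := (le_nu_iff h0 _).1 h
    rw [hx, pow_succ] at h2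
    have := Nat.dvd_of_mul_dvd_mul_left (by positivity) h2
    omega
  · exact (le_nu_iff h0 k).2 ⟨_, hx⟩

lemma two_pow_nu_le {x : ℕ} (hx : x ≠ 0) : 2 ^ ν x ≤ x :=
  Nat.le_of_dvd (by omega) pow_padicValNat_dvd

lemma nu_lt {n x : ℕ} (hx : x ≠ 0) (h : x < 2 ^ n) : ν x < n :=
  (Nat.pow_lt_pow_iff_right (by norm_num : 1 < 2)).1 ((two_pow_nu_le hx).trans_lt h)

lemma add_two_pow_nu_le {n x : ℕ} (hx : x ≠ 0) (h : x < 2 ^ n) : x + 2 ^ ν x ≤ 2 ^ n := by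
  have h1 : 2 ^ ν x ∣ 2 ^ n - x :=
    Nat.dvd_sub (pow_dvd_pow 2 (nu_lt hx h).le) pow_padicValNat_dvd
  have := Nat.le_of_dvd (by omega) h1
  omega

lemma nu_two_pow_add {k i : ℕ} (h0 : i ≠ 0) (h : i < 2 ^ k) : ν (2 ^ k + i) = ν i := by
  obtain ⟨m, hm⟩ := nu_decomp h0
  have hk := nu_lt h0 h
  obtain ⟨d, hd⟩ := Nat.exists_eq_add_of_lt hk
  apply nu_eq_of_decomp (m := 2 ^ d + m)
  rw [hd]
  nth_rewrite 2 [hm]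
  ring

lemma nu_two_pow (k : ℕ) : ν (2 ^ k) = k := nu_eq_of_decomp (m := 0) (by ring)

lemma Near.nu_lt {u v : ℕ} (h : Near u v) (hu : u ≠ 0) (huv : u ≠ v) : ν u < ν v := by
  by_contra! hle
  have h1 : 2 ^ ν v ∣ u := (le_nu_iff hu _).1 hle
  have h2 : 2 ^ ν v ∣ v := pow_padicValNat_dvd
  obtain ⟨hl, hr⟩ := h
  rcases lt_or_gt_of_ne huv with hlt | hlt
  · have := Nat.le_of_dvd (by omega) (Nat.dvd_sub h2 h1)
    omega
  · have := Nat.le_of_dvd (by omega) (Nat.dvd_sub h1 h2)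
    omega

lemma Near.nu_le {u v : ℕ} (h : Near u v) (hu : u ≠ 0) : ν u ≤ ν v := by
  by_cases huv : u = v
  · rw [huv]
  · exact (h.nu_lt hu huv).le

lemma near_succ {i : ℕ} (hi : i ≠ 0) : Near i (i + 1) ∨ Near (i + 1) i := by
  have key : ∀ x, x ≠ 0 → 2 ∣ x → 2 ≤ 2 ^ ν x := fun x hx h =>
    Nat.le_self_pow (by have := (le_nu_iff hx 1).2 (by simpa using h); omega) 2
  rcases Nat.even_or_odd' i with ⟨m, hm | hm⟩
  · have := key i hi ⟨m, hm⟩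
    right; constructor <;> omega
  · have := key (i + 1) (by omega) ⟨m + 1, by omega⟩
    left; constructor <;> omega

/-- A comparable pair lies between two consecutive multiples of `2 ^ (l + 1)` for every
`l ≥ ν v`. -/
lemma Near.div_eq {u v l : ℕ} (h : Near u v) (hv : v ≠ 0) (hl : ν v ≤ l) :
    u / 2 ^ (l + 1) = v / 2 ^ (l + 1) := by
  obtain ⟨m, hm⟩ := nu_decomp hv
  obtain ⟨d, rfl⟩ := Nat.exists_eq_add_of_le hl
  obtain ⟨h1, h2⟩ := h
  have e : 2 ^ (ν v + d + 1) = 2 ^ (ν v + 1) * 2 ^ d := by ring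
  have key : ∀ x, x < v + 2 ^ ν v → v < x + 2 ^ ν v → x / 2 ^ (ν v + 1) = m := by
    intro x hx1 hx2
    rw [pow_succ]
    generalize 2 ^ ν v = t at *
    apply Nat.div_eq_of_lt_le <;> nlinarith
  have hp : 0 < 2 ^ ν v := by positivity
  rw [e, ← Nat.div_div_eq_div_mul, ← Nat.div_div_eq_div_mul, key u h1 h2,
    key v (by omega) (by omega)]

/-- Within a block of length `2 ^ (l + 1)` there is at most one vertex of valuation `l`. -/
lemma eq_of_div_eq {u v : ℕ} (hu : u ≠ 0) (hv : v ≠ 0) (h : ν u = ν v)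
    (hd : u / 2 ^ (ν u + 1) = v / 2 ^ (ν u + 1)) : u = v := by
  have key : ∀ x, x ≠ 0 → x = 2 ^ ν x * (2 * (x / 2 ^ (ν x + 1)) + 1) := by
    intro x hx
    obtain ⟨m, hm⟩ := nu_decomp hx
    have e : x / 2 ^ (ν x + 1) = m := by
      rw [pow_succ, ← Nat.div_div_eq_div_mul]
      nth_rewrite 1 [hm]
      rw [Nat.mul_div_cancel_left _ (by positivity)]
      omega
    rw [e]
    exact hm
  rw [key u hu, key v hv, hd, h]

/-- Every `u` of valuation at most `l` lies in the block of some vertex of valuation `l`. -/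
lemma exists_centre {n u l : ℕ} (hu : u ≠ 0) (hun : u < 2 ^ n) (hln : l < n) (hl : ν u ≤ l) :
    ∃ w, w ≠ 0 ∧ w < 2 ^ n ∧ ν w = l ∧ Near u w := by
  have hw : ν (2 ^ l * (2 * (u / 2 ^ (l + 1)) + 1)) = l := nu_eq_of_decomp rfl
  refine ⟨2 ^ l * (2 * (u / 2 ^ (l + 1)) + 1), by positivity, ?_, hw, ?_⟩
  · obtain ⟨d, rfl⟩ := Nat.exists_eq_add_of_lt hln
    have hq : u / 2 ^ (l + 1) < 2 ^ d := by
      apply Nat.div_lt_of_lt_mul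
      rw [← pow_add]
      convert hun using 2
      ring
    calc 2 ^ l * (2 * (u / 2 ^ (l + 1)) + 1) < 2 ^ l * (2 * 2 ^ d) := by gcongr; omega
      _ = 2 ^ (l + d + 1) := by ring
  · unfold Near
    rw [hw]
    have h1 := Nat.div_add_mod u (2 ^ (l + 1))
    have h2 : u % 2 ^ (l + 1) < 2 ^ (l + 1) := Nat.mod_lt _ (by positivity)
    have h3 : u % 2 ^ (l + 1) ≠ 0 := fun h => by
      have := (le_nu_iff hu (l + 1)).2 (Nat.dvd_of_mod_eq_zero h)
      omega
    rw [pow_succ] at *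
    generalize u / (2 ^ l * 2) = q at *
    generalize u % (2 ^ l * 2) = r at *
    generalize 2 ^ l = t at *
    constructor <;> nlinarith [Nat.pos_of_ne_zero h3]

/-! ### Uniqueness of the ranking of the path -/

/-- A stretch of `m` consecutive vertices ranked with `k` labels has `m ≤ 2 ^ k - 1`; in case of
equality the ranking is the ruler function. -/
lemma ruler_unique (f : ℕ → ℕ) (k : ℕ) : ∀ a m, GoodOn f a m →
    (∀ i, a < i → i ≤ a + m → 1 ≤ f i ∧ f i ≤ k) →
    m + 1 ≤ 2 ^ k ∧ (m + 1 = 2 ^ k → ∀ i, 0 < i → i ≤ m → f (a + i) = ν i + 1) := by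
  induction k with
  | zero =>
    intro a m _ hb
    have hm : m = 0 := by
      by_contra h
      have := hb (a + 1) (by omega) (by omega)
      omega
    subst hm
    exact ⟨by simp, fun _ i _ _ => by omega⟩
  | succ k ih =>
    intro a m hg hb
    have hpos : 0 < 2 ^ k := by positivity
    have hs : 2 ^ (k + 1) = 2 * 2 ^ k := by ring
    by_cases hex : ∃ p, a < p ∧ p ≤ a + m ∧ f p = k + 1
    · obtain ⟨p, hp1, hp2, hp⟩ := hex
      have huniq : ∀ q, a < q → q ≤ a + m → q ≠ p → f q ≤ k := by
        intro q hq1 hq2 hqp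
        by_contra! hlt
        have hq : f q = k + 1 := by have := hb q hq1 hq2; omega
        rcases lt_or_gt_of_ne hqp with h | h
        · obtain ⟨l, h1, h2, h3⟩ := hg q p hq1 h hp2 (by omega)
          have := hb l (by omega) (by omega)
          omega
        · obtain ⟨l, h1, h2, h3⟩ := hg p q hp1 h hq2 (by omega)
          have := hb l (by omega) (by omega)
          omega
      obtain ⟨hL, hL'⟩ := ih a (p - a - 1)
        (fun i j h1 h2 h3 h4 => hg i j h1 h2 (by omega) h4)
        (fun i h1 h2 => ⟨(hb i h1 (by omega)).1, huniq i h1 (by omega) (by omega)⟩)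
      obtain ⟨hR, hR'⟩ := ih p (a + m - p)
        (fun i j h1 h2 h3 h4 => hg i j (by omega) h2 (by omega) h4)
        (fun i h1 h2 => ⟨(hb i (by omega) (by omega)).1,
          huniq i (by omega) (by omega) (by omega)⟩)
      refine ⟨by omega, fun hm i hi1 hi2 => ?_⟩
      have hpa : p = a + 2 ^ k := by omega
      rcases lt_trichotomy i (2 ^ k) with h | h | h
      · exact hL' (by omega) i hi1 (by omega)
      · rw [h, ← hpa, hp, nu_two_pow]
      · obtain ⟨j, rfl⟩ := Nat.exists_eq_add_of_lt h
        have := hR' (by omega) (j + 1) (by omega) (by omega)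
        rw [add_assoc, nu_two_pow_add (by omega) (by omega), ← this, hpa, add_assoc]
    · push Not at hex
      obtain ⟨h1, -⟩ := ih a m hg (fun i hi1 hi2 => by
        have := hb i hi1 hi2
        have := hex i hi1 hi2
        omega)
      exact ⟨by omega, fun _ => by omega⟩

/-! ### Walks and rankings -/

lemma pathG_adj {N a b : ℕ} : (pathG N).Adj a b ↔
    (1 ≤ a ∧ b = a + 1 ∧ b ≤ N) ∨ (1 ≤ b ∧ a = b + 1 ∧ a ≤ N) := by
  simp only [pathG, SimpleGraph.fromRel_adj]
  omega

lemma IsRanking.walk {V : Type*} {G : SimpleGraph V} {k : ℕ} {f : V → ℕ} (h : IsRanking G k f)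
    {u v : V} (huv : u ≠ v) (hf : f u = f v) (p : G.Walk u v) : ∃ w ∈ p.support, f u < f w := by
  classical
  obtain ⟨w, hw, hlt⟩ := h.2 u v huv hf p.bypass p.bypass_isPath
  exact ⟨w, p.support_bypass_subset_support hw, hlt⟩

lemma IsRanking.mono {V : Type*} {G H : SimpleGraph V} (hGH : G ≤ H) {k : ℕ} {f : V → ℕ}
    (h : IsRanking H k f) : IsRanking G k f := by
  refine ⟨h.1, fun u v huv hf p _ => ?_⟩
  obtain ⟨w, hw, hlt⟩ := h.walk huv hf (p.mapLe hGH)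
  exact ⟨w, by simpa using hw, hlt⟩

lemma exists_interval_walk {N : ℕ} {H : SimpleGraph ℕ} (hH : pathG N ≤ H) {i j : ℕ}
    (hi : 1 ≤ i) (hij : i ≤ j) (hj : j ≤ N) :
    ∃ p : H.Walk i j, ∀ x ∈ p.support, i ≤ x ∧ x ≤ j := by
  induction j, hij using Nat.le_induction with
  | base => exact ⟨.nil, by simp⟩
  | succ j hij ih =>
    obtain ⟨p, hp⟩ := ih (by omega)
    refine ⟨p.concat (hH (pathG_adj.2 (Or.inl ⟨by omega, rfl, hj⟩))), fun x hx => ?_⟩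
    rw [SimpleGraph.Walk.support_concat] at hx
    simp only [List.mem_append, List.mem_singleton] at hx
    rcases hx with hx | rfl
    · have := hp x hx
      omega
    · omega

lemma IsRanking.goodOn {N k : ℕ} {f : ℕ → ℕ} (h : IsRanking (pathG N) k f) : GoodOn f 0 N := by
  intro i j h1 h2 h3 h4
  obtain ⟨p, hp⟩ := exists_interval_walk (le_refl (pathG N)) (by omega) h2.le (by omega)
  obtain ⟨w, hw, hlt⟩ := h.walk h2.ne h4 p
  have := hp w hw
  refine ⟨w, lt_of_le_of_ne this.1 ?_, lt_of_le_of_ne this.2 ?_, hlt⟩ <;> rintro rfl <;> omega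

lemma le_of_isRanking {n k : ℕ} {f : ℕ → ℕ} (h : IsRanking (pathG (2 ^ n - 1)) k f) : n ≤ k := by
  have h1 := (ruler_unique f k 0 _ h.goodOn (fun i _ _ => h.1 i)).1
  have : 0 < 2 ^ n := by positivity
  exact (Nat.pow_le_pow_iff_right (by norm_num : 1 < 2)).1 (by omega)

lemma isRanking_eq_ruler {n : ℕ} {f : ℕ → ℕ} (h : IsRanking (pathG (2 ^ n - 1)) n f) {i : ℕ}
    (h0 : i ≠ 0) (hi : i < 2 ^ n) : f i = ν i + 1 := by
  have := (ruler_unique f n 0 _ h.goodOn (fun i _ _ => h.1 i)).2 (by omega) i (by omega) (by omega)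
  simpa using this

/-- Every edge of a supergraph of the path with the same rank number joins a comparable pair. -/
lemma near_of_ranking {n : ℕ} {H : SimpleGraph ℕ} (hH : pathG (2 ^ n - 1) ≤ H) {f : ℕ → ℕ}
    (h : IsRanking H n f) {u v : ℕ} (hu0 : u ≠ 0) (hu : u < 2 ^ n) (hv0 : v ≠ 0) (hv : v < 2 ^ n)
    (hadj : H.Adj u v) (hle : ν u ≤ ν v) : Near u v := by
  have hf : ∀ x, x ≠ 0 → x < 2 ^ n → f x = ν x + 1 := fun x h0 hx =>
    isRanking_eq_ruler (h.mono hH) h0 hx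
  obtain ⟨w, hw0, hw, hwl, hnear⟩ := exists_centre hu0 hu (nu_lt hv0 hv) hle
  by_cases hwv : v = w
  · rwa [hwv]
  exfalso
  have hq : ∃ q : H.Walk u w, ∀ x ∈ q.support, x ≠ 0 ∧ x < 2 ^ n ∧ Near x w := by
    obtain ⟨n1, n2⟩ := hnear
    rcases le_total u w with hc | hc
    · obtain ⟨q, hq⟩ := exists_interval_walk hH (by omega) hc (by omega)
      exact ⟨q, fun x hx => by
        have := hq x hx
        exact ⟨by omega, by omega, by omega, by omega⟩⟩
    · obtain ⟨q, hq⟩ := exists_interval_walk hH (by omega) hc (by omega)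
      exact ⟨q.reverse, fun x hx => by
        have := hq x (by simpa using hx)
        exact ⟨by omega, by omega, by omega, by omega⟩⟩
  obtain ⟨q, hq⟩ := hq
  obtain ⟨x, hx, hlt⟩ := h.walk hwv (by rw [hf v hv0 hv, hf w hw0 hw, hwl])
    (SimpleGraph.Walk.cons hadj.symm q)
  rw [SimpleGraph.Walk.support_cons, List.mem_cons] at hx
  rcases hx with rfl | hx
  · omega
  · obtain ⟨hx0, hx1, hx2⟩ := hq x hx
    have := hx2.nu_le hx0
    rw [hf v hv0 hv, hf x hx0 hx1] at hlt
    omega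

/-- If all edges join comparable pairs, then the ruler function is a ranking. -/
lemma isRanking_of_near {n : ℕ} (hn : 0 < n) {H : SimpleGraph ℕ}
    (hH : ∀ u v, H.Adj u v → (u ≠ 0 ∧ u < 2 ^ n) ∧ (v ≠ 0 ∧ v < 2 ^ n) ∧ (Near u v ∨ Near v u)) :
    IsRanking H n (fun x => if x < 2 ^ n then ν x + 1 else 1) := by
  refine ⟨fun v => ?_, fun u v huv hf p _ => ?_⟩
  · dsimp only
    split_ifs with h
    · by_cases h0 : v = 0
      · subst h0
        simp
        omega
      · have := nu_lt h0 h
        omega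
    · omega
  · by_contra! hcon
    have key : ∀ (l a b : ℕ) (q : H.Walk a b), (∀ x ∈ q.support, x < 2 ^ n → ν x ≤ l) →
        a = b ∨ ((a ≠ 0 ∧ a < 2 ^ n) ∧ (b ≠ 0 ∧ b < 2 ^ n) ∧
          a / 2 ^ (l + 1) = b / 2 ^ (l + 1)) := by
      intro l a b q
      induction q with
      | nil => intro _; exact Or.inl rfl
      | @cons a c b hadj q ih =>
        intro hs
        obtain ⟨ha, hc, hnear⟩ := hH _ _ hadj
        have hla := hs a (by simp) ha.2
        have hlc := hs c (by simp) hc.2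
        have hac : a / 2 ^ (l + 1) = c / 2 ^ (l + 1) := by
          rcases hnear with h | h
          · exact h.div_eq hc.1 hlc
          · exact (h.div_eq ha.1 hla).symm
        right
        rcases ih (fun x hx => hs x (by simp [hx])) with rfl | ⟨_, hb, he⟩
        · exact ⟨ha, hc, hac⟩
        · exact ⟨ha, hb, hac.trans he⟩
    have hu : (u ≠ 0 ∧ u < 2 ^ n) := by
      cases p with
      | nil => exact absurd rfl huv
      | cons hadj _ => exact (hH _ _ hadj).1
    rcases key (ν u) u v p (fun x hx hxn => by
      have := hcon x hx
      rw [if_pos hxn, if_pos hu.2] at this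
      omega) with h | ⟨_, hv, he⟩
    · exact huv h
    · simp only [if_pos hu.2, if_pos hv.2] at hf
      exact huv (eq_of_div_eq hu.1 hv.1 (by omega) he)

lemma rankNumber_eq {n : ℕ} {H : SimpleGraph ℕ} (hH : pathG (2 ^ n - 1) ≤ H) {f : ℕ → ℕ}
    (h : IsRanking H n f) : rankNumber H = n := by
  apply le_antisymm
  · exact Nat.sInf_le ⟨f, h⟩
  · exact le_csInf ⟨n, f, h⟩ fun k ⟨g, hg⟩ => le_of_isRanking (hg.mono hH)

/-! ### Counting comparable pairs -/

/-- The pairs `(v, u)` of distinct vertices with `Near u v`, listed by the upper vertex `v`. -/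
def nearPairs (n : ℕ) : Finset (Σ _ : ℕ, ℕ) :=
  (Finset.Icc 1 (2 ^ n - 1)).sigma fun v => (Finset.Ioo (v - 2 ^ ν v) (v + 2 ^ ν v)).erase v

lemma mem_nearPairs {n u v : ℕ} : (⟨v, u⟩ : Σ _ : ℕ, ℕ) ∈ nearPairs n ↔
    (v ≠ 0 ∧ v < 2 ^ n) ∧ (u ≠ 0 ∧ u < 2 ^ n) ∧ u ≠ v ∧ Near u v := by
  simp only [nearPairs, Finset.mem_sigma, Finset.mem_Icc, Finset.mem_erase, Finset.mem_Ioo, Near]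
  constructor
  · rintro ⟨h1, h2, h3⟩
    have := two_pow_nu_le (x := v) (by omega)
    have := add_two_pow_nu_le (x := v) (n := n) (by omega) (by omega)
    omega
  · rintro ⟨h1, h2, h3, h4⟩
    omega

lemma sum_two_pow_nu (n : ℕ) : 2 * ∑ v ∈ Finset.Ico 1 (2 ^ n), 2 ^ ν v = n * 2 ^ n := by
  induction n with
  | zero => simp
  | succ n ih =>
    have hpos : 0 < 2 ^ n := by positivity
    have e : 2 ^ (n + 1) = 2 ^ n + 2 ^ n := by ring
    rw [← Finset.sum_Ico_consecutive _ (show 1 ≤ 2 ^ n by omega)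
      (show 2 ^ n ≤ 2 ^ (n + 1) by omega),
      Finset.sum_eq_sum_Ico_succ_bot (show 2 ^ n < 2 ^ (n + 1) by omega), nu_two_pow]
    have h : ∑ v ∈ Finset.Ico (2 ^ n + 1) (2 ^ (n + 1)), 2 ^ ν v
        = ∑ v ∈ Finset.Ico 1 (2 ^ n), 2 ^ ν v := by
      rw [e, add_comm (2 ^ n) 1, ← Finset.sum_Ico_add]
      refine Finset.sum_congr rfl fun v hv => ?_
      rw [Finset.mem_Ico] at hv
      rw [nu_two_pow_add (by omega) hv.2]
    rw [h, mul_add, mul_add, ih]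
    ring

lemma card_nearPairs (n : ℕ) : (nearPairs n).card + 2 * (2 ^ n - 1) = n * 2 ^ n := by
  rw [nearPairs, Finset.card_sigma, ← sum_two_pow_nu, Finset.mul_sum]
  have hpos : 0 < 2 ^ n := by positivity
  have e : Finset.Icc 1 (2 ^ n - 1) = Finset.Ico 1 (2 ^ n) := by
    ext x; simp only [Finset.mem_Icc, Finset.mem_Ico]; omega
  have c : 2 * (2 ^ n - 1) = ∑ _v ∈ Finset.Ico 1 (2 ^ n), 2 := by simp [mul_comm]
  rw [e, c, ← Finset.sum_add_distrib]
  refine Finset.sum_congr rfl fun v hv => ?_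
  rw [Finset.mem_Ico] at hv
  have h1 := two_pow_nu_le (x := v) (by omega)
  have h2 : 0 < 2 ^ ν v := by positivity
  rw [Finset.card_erase_of_mem (by rw [Finset.mem_Ioo]; omega), Nat.card_Ioo]
  omega

/-- The edges joining comparable pairs. -/
def nearEdges (n : ℕ) : Finset (Sym2 ℕ) := (nearPairs n).image fun p => s(p.2, p.1)

/-- The edges of the path on `2 ^ n - 1` vertices. -/
def pathEdges (n : ℕ) : Finset (Sym2 ℕ) := (Finset.Ico 1 (2 ^ n - 1)).image fun i => s(i, i + 1)

lemma mem_nearEdges {n u v : ℕ} : s(u, v) ∈ nearEdges n ↔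
    (u ≠ 0 ∧ u < 2 ^ n) ∧ (v ≠ 0 ∧ v < 2 ^ n) ∧ u ≠ v ∧ (Near u v ∨ Near v u) := by
  simp only [nearEdges, Finset.mem_image, Sigma.exists, mem_nearPairs, Sym2.eq_iff]
  constructor
  · rintro ⟨a, b, ⟨h1, h2, h3, h4⟩, ⟨rfl, rfl⟩ | ⟨rfl, rfl⟩⟩
    · exact ⟨h2, h1, h3, Or.inl h4⟩
    · exact ⟨h1, h2, h3.symm, Or.inr h4⟩
  · rintro ⟨h1, h2, h3, h4 | h4⟩
    · exact ⟨v, u, ⟨h2, h1, h3, h4⟩, Or.inl ⟨rfl, rfl⟩⟩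
    · exact ⟨u, v, ⟨h1, h2, h3.symm, h4⟩, Or.inr ⟨rfl, rfl⟩⟩

lemma mem_pathEdges {n u v : ℕ} :
    s(u, v) ∈ pathEdges n ↔ (pathG (2 ^ n - 1)).Adj u v := by
  simp only [pathEdges, Finset.mem_image, Finset.mem_Ico, Sym2.eq_iff, pathG_adj]
  constructor
  · rintro ⟨i, h, ⟨rfl, rfl⟩ | ⟨rfl, rfl⟩⟩ <;> omega
  · rintro (h | h)
    · exact ⟨u, by omega, by omega⟩
    · exact ⟨v, by omega, by omega⟩

lemma card_nearEdges (n : ℕ) : (nearEdges n).card = (nearPairs n).card := by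
  apply Finset.card_image_of_injOn
  rintro ⟨v, u⟩ h ⟨v', u'⟩ h' he
  rw [Finset.mem_coe, mem_nearPairs] at h h'
  rcases Sym2.eq_iff.1 he with ⟨h1, h2⟩ | ⟨h1, h2⟩
  · dsimp only at h1 h2
    rw [h1, h2]
  · dsimp only at h1 h2
    -- the upper vertex of a comparable pair has the larger valuation, so it is determined
    subst h1 h2
    have a := h.2.2.2.nu_lt h.2.1.1 h.2.2.1
    have b := h'.2.2.2.nu_lt h'.2.1.1 h'.2.2.1
    omega

lemma card_pathEdges (n : ℕ) : (pathEdges n).card = 2 ^ n - 2 := by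
  rw [pathEdges, Finset.card_image_of_injective, Nat.card_Ico]
  · omega
  · intro i j h
    have := Sym2.eq_iff.1 h
    omega

lemma pathEdges_subset (n : ℕ) : pathEdges n ⊆ nearEdges n := by
  intro e he
  obtain ⟨i, hi, rfl⟩ := Finset.mem_image.1 he
  rw [Finset.mem_Ico] at hi
  exact mem_nearEdges.2 ⟨by omega, by omega, by omega, near_succ (by omega)⟩

lemma card_sdiff_edges {n : ℕ} (hn : 3 < n) :
    (nearEdges n \ pathEdges n).card = (n - 3) * 2 ^ n + 4 := by
  rw [Finset.card_sdiff_of_subset (pathEdges_subset n), card_nearEdges, card_pathEdges]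
  have h := card_nearPairs n
  obtain ⟨m, rfl⟩ : ∃ m, n = m + 3 := ⟨n - 3, by omega⟩
  have hpos : 2 ^ 3 ≤ 2 ^ (m + 3) := Nat.pow_le_pow_right (by norm_num) (by omega)
  rw [add_mul] at h
  rw [Nat.add_sub_cancel]
  omega

/-- for every `n > 3`, `μ(P_{2^n - 1}) = (n - 3)·2^n + 4`: the maximum
number of edges that can be added to the path `P_{2^n - 1}` without changing its rank
number. -/
theorem mu_path (n : ℕ) (hn : 3 < n) :
    muOn (pathG (2 ^ n - 1)) (Set.Icc 1 (2 ^ n - 1)) = (n - 3) * 2 ^ n + 4 := by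
  have hpath : ∀ u v, (pathG (2 ^ n - 1)).Adj u v → s(u, v) ∈ nearEdges n := fun u v h =>
    pathEdges_subset n (mem_pathEdges.2 h)
  have hG : rankNumber (pathG (2 ^ n - 1)) = n :=
    rankNumber_eq le_rfl (isRanking_of_near (by omega) fun u v h => by
      have := mem_nearEdges.1 (hpath u v h)
      exact ⟨this.1, this.2.1, this.2.2.2⟩)
  apply IsGreatest.csSup_eq
  constructor
  · refine ⟨nearEdges n \ pathEdges n, card_sdiff_edges hn, fun e he => ?_, ?_⟩
    · induction e with | _ u v
      rw [Finset.mem_sdiff, mem_nearEdges, mem_pathEdges] at he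
      obtain ⟨⟨hu, hv, huv, -⟩, hp⟩ := he
      refine ⟨by simpa using huv, fun x hx => ?_, by simpa using hp⟩
      rw [Set.mem_Icc]
      rcases Sym2.mem_iff.1 hx with rfl | rfl <;> omega
    · rw [hG]
      refine rankNumber_eq le_sup_left (isRanking_of_near (by omega) fun u v h => ?_)
      have hmem : s(u, v) ∈ nearEdges n := by
        rcases h with h | h
        · exact hpath u v h
        · rw [SimpleGraph.fromEdgeSet_adj, Finset.mem_coe] at h
          exact (Finset.mem_sdiff.1 h.1).1
      have := mem_nearEdges.1 hmem
      exact ⟨this.1, this.2.1, this.2.2.2⟩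
  · rintro N ⟨S, rfl, hS, hr⟩
    rw [← card_sdiff_edges hn]
    refine Finset.card_le_card fun e he => ?_
    rw [hG] at hr
    -- a positive infimum of naturals is attained
    have hmem : n ∈ {k | ∃ f, IsRanking
        (pathG (2 ^ n - 1) ⊔ SimpleGraph.fromEdgeSet (S : Set (Sym2 ℕ))) k f} := by
      have hne := Nat.nonempty_of_pos_sInf (lt_of_lt_of_eq (by omega : 0 < n) hr.symm)
      have := Nat.sInf_mem hne
      rwa [show sInf _ = n from hr] at this
    obtain ⟨f, hf⟩ := hmem
    obtain ⟨hd, hV, hp⟩ := hS e he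
    induction e with | _ u v
    have hu := hV u (by simp)
    have hv := hV v (by simp)
    have huv : u ≠ v := by simpa using hd
    rw [Set.mem_Icc] at hu hv
    have hadj : (pathG (2 ^ n - 1) ⊔ SimpleGraph.fromEdgeSet (S : Set (Sym2 ℕ))).Adj u v :=
      Or.inr ((SimpleGraph.fromEdgeSet_adj _).2 ⟨he, huv⟩)
    rw [Finset.mem_sdiff, mem_nearEdges, mem_pathEdges]
    refine ⟨⟨by omega, by omega, huv, ?_⟩, hp⟩
    rcases le_total (ν u) (ν v) with h | h
    · exact Or.inl (near_of_ranking le_sup_left hf (by omega) (by omega) (by omega) (by omega)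
        hadj h)
    · exact Or.inr (near_of_ranking le_sup_left hf (by omega) (by omega) (by omega) (by omega)
        hadj.symm h)
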